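/- Let (J, v, π) be a classical solution of (E1)–(E3) on [0,L]×[0,T] with boundary condition v(0,t) = v(L,t) = 0, such that ∂_y J exists with ∂_t ∂_y J continuous, ρ₀ ≥ 0 on [0,L], π ≥ 0 on [0,L]×[0,T], and J₀(y) ≥ J̲ for all y ∈ [0,L] for some constant J̲ > 0. Set m₀ := ∫₀ᴸ ρ₀ dy, ℓ₀ := ∫₀ᴸ J₀ dy, and E₀ := ∫₀ᴸ ( ρ₀ v₀²/2 + J₀ π₀/(γ−1) ) dy. Then for all (y,t) ∈ [0,L]×[0,T]: J(y,t) ≥ J̲ exp{ −(4/μ)√(2 m₀ E₀) − ((γ−1) E₀/(μ ℓ₀)) e^{(4/μ)√(2 m₀ E₀)} t }. -/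

import Mathlib

open Set MeasureTheory

/-- A classical solution `(J, v, π)` of the Lagrangian 1D non-heat-conductive compressible
Navier–Stokes system (E1)–(E3) on `[0,L] × [0,T]`, together with its partial derivatives
`Jt = ∂ₜJ`, `vy = ∂_y v`, `vt = ∂ₜv`, `w = ∂_y((∂_y v)/J)`, `πy = ∂_y π`, `πt = ∂ₜπ`,
all continuous on `[0,L] × [0,T]`, and `J > 0` everywhere. -/
structure ClassicalSolution (L T μ γ : ℝ) (ρ₀ : ℝ → ℝ)
    (J v π Jt vy vt w πy πt : ℝ → ℝ → ℝ) : Prop where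
  Jpos : ∀ y ∈ Set.Icc (0:ℝ) L, ∀ t ∈ Set.Icc (0:ℝ) T, 0 < J y t
  contJ : ContinuousOn (fun p : ℝ × ℝ => J p.1 p.2) (Set.Icc 0 L ×ˢ Set.Icc 0 T)
  contv : ContinuousOn (fun p : ℝ × ℝ => v p.1 p.2) (Set.Icc 0 L ×ˢ Set.Icc 0 T)
  contPi : ContinuousOn (fun p : ℝ × ℝ => π p.1 p.2) (Set.Icc 0 L ×ˢ Set.Icc 0 T)
  hJt : ∀ y ∈ Set.Icc (0:ℝ) L, ∀ t ∈ Set.Icc (0:ℝ) T,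
    HasDerivWithinAt (fun s => J y s) (Jt y t) (Set.Icc 0 T) t
  hvy : ∀ y ∈ Set.Icc (0:ℝ) L, ∀ t ∈ Set.Icc (0:ℝ) T,
    HasDerivWithinAt (fun x => v x t) (vy y t) (Set.Icc 0 L) y
  hvt : ∀ y ∈ Set.Icc (0:ℝ) L, ∀ t ∈ Set.Icc (0:ℝ) T,
    HasDerivWithinAt (fun s => v y s) (vt y t) (Set.Icc 0 T) t
  hw : ∀ y ∈ Set.Icc (0:ℝ) L, ∀ t ∈ Set.Icc (0:ℝ) T,
    HasDerivWithinAt (fun x => vy x t / J x t) (w y t) (Set.Icc 0 L) y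
  hPiy : ∀ y ∈ Set.Icc (0:ℝ) L, ∀ t ∈ Set.Icc (0:ℝ) T,
    HasDerivWithinAt (fun x => π x t) (πy y t) (Set.Icc 0 L) y
  hPit : ∀ y ∈ Set.Icc (0:ℝ) L, ∀ t ∈ Set.Icc (0:ℝ) T,
    HasDerivWithinAt (fun s => π y s) (πt y t) (Set.Icc 0 T) t
  contJt : ContinuousOn (fun p : ℝ × ℝ => Jt p.1 p.2) (Set.Icc 0 L ×ˢ Set.Icc 0 T)
  contvy : ContinuousOn (fun p : ℝ × ℝ => vy p.1 p.2) (Set.Icc 0 L ×ˢ Set.Icc 0 T)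
  contvt : ContinuousOn (fun p : ℝ × ℝ => vt p.1 p.2) (Set.Icc 0 L ×ˢ Set.Icc 0 T)
  contw : ContinuousOn (fun p : ℝ × ℝ => w p.1 p.2) (Set.Icc 0 L ×ˢ Set.Icc 0 T)
  contPiy : ContinuousOn (fun p : ℝ × ℝ => πy p.1 p.2) (Set.Icc 0 L ×ˢ Set.Icc 0 T)
  contPit : ContinuousOn (fun p : ℝ × ℝ => πt p.1 p.2) (Set.Icc 0 L ×ˢ Set.Icc 0 T)
  eq1 : ∀ y ∈ Set.Icc (0:ℝ) L, ∀ t ∈ Set.Icc (0:ℝ) T, Jt y t = vy y t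
  eq2 : ∀ y ∈ Set.Icc (0:ℝ) L, ∀ t ∈ Set.Icc (0:ℝ) T,
    ρ₀ y * vt y t - μ * w y t + πy y t = 0
  eq3 : ∀ y ∈ Set.Icc (0:ℝ) L, ∀ t ∈ Set.Icc (0:ℝ) T,
    πt y t + γ * (vy y t / J y t) * π y t = μ * (γ - 1) * (vy y t / J y t) ^ 2

/-!
By (E2) the effective viscous flux `G = μ (∂_y v) / J - π` satisfies `∂_y G = ρ₀ ∂ₜv`, so
`G(y,t) - G(0,t)` is the time derivative of the momentum `∫₀ʸ ρ₀ v`. Conservation of energy and the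
Cauchy–Schwarz inequality bound this momentum by `√(2 m₀ E₀)`. Since (E1) reads
`∂ₜ log J = (G + π) / μ`, multiplying `J` by the integrating factor of `G` gives a function `W` with
`∂ₜW = (π / μ) W ≥ 0`, and up to factors `exp (± 2 √(2 m₀ E₀) / μ)` it equals `b(t) J` with a factor
`b` depending on time only. An upper bound for `b` thus bounds `J` from below. It comes from
integrating in `y`: as `∫ J = ℓ₀` is conserved, `b` is controlled by `∫ W`, and
`∫ J π ≤ (γ - 1) E₀` turns the equation for `W` into a Grönwall inequality for `∫ W`.
-/

theorem continuousOn_comp_fst_prod {X Y Z : Type*} [TopologicalSpace X] [TopologicalSpace Y]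
    [TopologicalSpace Z] {f : X → Z} {s : Set X} {t : Set Y} (hf : ContinuousOn f s) :
    ContinuousOn (fun p : X × Y ↦ f p.1) (s ×ˢ t) :=
  hf.comp continuousOn_fst fun _ hp ↦ hp.1

section IntervalAnalysis

open Function intervalIntegral

variable {E : Type*} [NormedAddCommGroup E] [NormedSpace ℝ E] {a b c d t : ℝ}

theorem hasDerivWithinAt_Ici_of_hasDerivWithinAt_Icc {f : ℝ → E} {f' : E} (ht : t ∈ Ico a b)
    (hf : HasDerivWithinAt f f' (Icc a b) t) : HasDerivWithinAt f f' (Ici t) t :=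
  hf.mono_of_mem_nhdsWithin <|
    Filter.mem_of_superset (Icc_mem_nhdsGE ht.2) (Icc_subset_Icc_left ht.1)

theorem eq_left_of_hasDerivWithinAt_Icc_zero {f : ℝ → E}
    (hf : ∀ x ∈ Icc a b, HasDerivWithinAt f 0 (Icc a b) x) (ht : t ∈ Icc a b) : f t = f a :=
  constant_of_has_deriv_right_zero (HasDerivWithinAt.continuousOn hf)
    (fun x hx ↦ hasDerivWithinAt_Ici_of_hasDerivWithinAt_Icc hx (hf x (Ico_subset_Icc_self hx)))
    t ht

theorem monotoneOn_Icc_of_hasDerivWithinAt_nonneg {f f' : ℝ → ℝ}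
    (hf : ∀ x ∈ Icc a b, HasDerivWithinAt f (f' x) (Icc a b) x)
    (hf' : ∀ x ∈ Icc a b, 0 ≤ f' x) : MonotoneOn f (Icc a b) :=
  monotoneOn_of_hasDerivWithinAt_nonneg (convex_Icc a b) (HasDerivWithinAt.continuousOn hf)
    (fun x hx ↦ (hf x (interior_subset hx)).mono interior_subset)
    (fun x hx ↦ hf' x (interior_subset hx))

theorem le_mul_exp_of_hasDerivWithinAt_le_mul {f f' : ℝ → ℝ} {K : ℝ}
    (hf : ∀ x ∈ Icc a b, HasDerivWithinAt f (f' x) (Icc a b) x)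
    (hf' : ∀ x ∈ Icc a b, f' x ≤ K * f x) (ht : t ∈ Icc a b) :
    f t ≤ f a * Real.exp (K * (t - a)) := by
  rw [← gronwallBound_ε0]
  refine le_gronwallBound_of_liminf_deriv_right_le (f' := f') (HasDerivWithinAt.continuousOn hf)
    (fun x hx _ hr ↦ ?_) le_rfl (fun x hx ↦ ?_) t ht
  · exact (hasDerivWithinAt_Ici_of_hasDerivWithinAt_Icc hx
      (hf x (Ico_subset_Icc_self hx))).liminf_right_slope_le hr
  · simpa only [add_zero] using hf' x (Ico_subset_Icc_self hx)

theorem integral_eq_sub_of_hasDerivWithinAt_Icc [CompleteSpace E] {f f' : ℝ → E} (hab : a ≤ b)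
    (hf : ∀ x ∈ Icc a b, HasDerivWithinAt f (f' x) (Icc a b) x)
    (hf' : IntervalIntegrable f' volume a b) : ∫ x in a..b, f' x = f b - f a :=
  integral_eq_sub_of_hasDerivAt_of_le hab (HasDerivWithinAt.continuousOn hf)
    (fun x hx ↦ (hf x (Ioo_subset_Icc_self hx)).hasDerivAt (Icc_mem_nhds hx.1 hx.2)) hf'

theorem hasDerivWithinAt_primitive_Icc [CompleteSpace E] {f : ℝ → E}
    (hf : ContinuousOn f (Icc a b)) (ht : t ∈ Icc a b) :
    HasDerivWithinAt (fun u ↦ ∫ x in a..u, f x) (f t) (Icc a b) t := by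
  have : Fact (t ∈ Icc a b) := ⟨ht⟩
  exact integral_hasDerivWithinAt_right
    ((hf.mono (Icc_subset_Icc_right ht.2)).intervalIntegrable_of_Icc ht.1)
    (hf.stronglyMeasurableAtFilter_nhdsWithin measurableSet_Icc t) (hf t ht)

theorem continuousOn_parametric_primitive {X : Type*} [TopologicalSpace X] {s : Set X}
    {F : ℝ → X → E} (hF : ContinuousOn (uncurry F) (Icc a b ×ˢ s)) :
    ContinuousOn (fun p : ℝ × X ↦ ∫ x in a..p.1, F x p.2) (Icc a b ×ˢ s) := by
  rcases lt_or_ge b a with hba | hab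
  · simp [Icc_eq_empty_of_lt hba]
  let clampedF (p : ↥(Icc a b ×ˢ s)) (x : ℝ) : E := F (projIcc a b hab x) p.1.2
  have continuous_clampedF : Continuous (uncurry clampedF) :=
    hF.comp_continuous (f := fun q : ↥(Icc a b ×ˢ s) × ℝ ↦ ((projIcc a b hab q.2 : ℝ), q.1.1.2))
      (by fun_prop) (fun q ↦ ⟨(projIcc a b hab q.2).2, q.1.2.2⟩)
  rw [continuousOn_iff_continuous_domRestrict]
  refine (continuous_parametric_intervalIntegral_of_continuous (a₀ := a) (μ := volume)
    continuous_clampedF (s := fun p ↦ p.1.1) (by fun_prop)).congr fun p ↦ ?_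
  refine integral_congr fun x hx ↦ ?_
  rw [uIcc_of_le p.2.1.1] at hx
  simp only [clampedF, projIcc_of_mem hab ⟨hx.1, hx.2.trans p.2.1.2⟩]

/-- Unlike the dominated-convergence versions, this covers the endpoints of the time interval: by
Fubini the integral of `F` is a primitive of the integral of `F'`. -/
theorem hasDerivWithinAt_integral_of_continuousOn [CompleteSpace E] {F F' : ℝ → ℝ → E}
    (hab : a ≤ b) (hFc : IntervalIntegrable (fun x ↦ F x c) volume a b)
    (hF : ∀ x ∈ Icc a b, ∀ s ∈ Icc c d, HasDerivWithinAt (F x) (F' x s) (Icc c d) s)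
    (hF' : ContinuousOn (uncurry F') (Icc a b ×ˢ Icc c d)) (ht : t ∈ Icc c d) :
    HasDerivWithinAt (fun s ↦ ∫ x in a..b, F x s) (∫ x in a..b, F' x t) (Icc c d) t := by
  have continuousOn_integral : ContinuousOn (fun s ↦ ∫ x in a..b, F' x s) (Icc c d) :=
    (continuousOn_parametric_primitive hF').uncurry_left
      (f := fun y s ↦ ∫ x in a..y, F' x s) b (right_mem_Icc.2 hab)
  refine ((hasDerivWithinAt_primitive_Icc continuousOn_integral ht).const_add
    (∫ x in a..b, F x c)).congr_of_mem (fun s hs ↦ ?_) ht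
  have hF's : ContinuousOn (uncurry F') (Icc a b ×ˢ Icc c s) :=
    hF'.mono (prod_mono_right (Icc_subset_Icc_right hs.2))
  have eq_add_primitive (x : ℝ) (hx : x ∈ Icc a b) : F x s = F x c + ∫ r in c..s, F' x r := by
    rw [integral_eq_sub_of_hasDerivWithinAt_Icc hs.1
      (fun r hr ↦ (hF x hx r ⟨hr.1, hr.2.trans hs.2⟩).mono (Icc_subset_Icc_right hs.2))
      ((hF's.uncurry_left x hx).intervalIntegrable_of_Icc hs.1)]
    abel
  have integrableOn_F' : IntegrableOn (uncurry F') (uIoc a b ×ˢ uIoc c s) := by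
    rw [uIoc_of_le hab, uIoc_of_le hs.1]
    exact (hF's.integrableOn_compact (isCompact_Icc.prod isCompact_Icc)).mono_set
      (prod_mono Ioc_subset_Icc_self Ioc_subset_Icc_self)
  have integrable_primitive : IntervalIntegrable (fun x ↦ ∫ r in c..s, F' x r) volume a b := by
    rw [intervalIntegrable_iff]
    simp only [integral_of_le hs.1, ← uIoc_of_le hs.1]
    rw [IntegrableOn, Measure.volume_eq_prod, ← Measure.prod_restrict] at integrableOn_F'
    exact integrableOn_F'.integral_prod_left
  calc ∫ x in a..b, F x s = ∫ x in a..b, (F x c + ∫ r in c..s, F' x r) :=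
        integral_congr fun x hx ↦ eq_add_primitive x (uIcc_of_le hab ▸ hx)
    _ = (∫ x in a..b, F x c) + ∫ x in a..b, ∫ r in c..s, F' x r :=
        integral_add hFc integrable_primitive
    _ = (∫ x in a..b, F x c) + ∫ r in c..s, ∫ x in a..b, F' x r := by
        rw [intervalIntegral_intervalIntegral_swap integrableOn_F']

end IntervalAnalysis

theorem sq_integral_mul_le {α : Type*} [MeasurableSpace α] {ν : Measure α} {r u : α → ℝ}
    (hr₀ : 0 ≤ᵐ[ν] r) (hr : Integrable r ν) (hru : Integrable (fun x ↦ r x * u x) ν)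
    (hru₂ : Integrable (fun x ↦ r x * u x ^ 2) ν) :
    (∫ x, r x * u x ∂ν) ^ 2 ≤ (∫ x, r x ∂ν) * ∫ x, r x * u x ^ 2 ∂ν := by
  have quadratic_nonneg (z : ℝ) :
      0 ≤ (∫ x, r x ∂ν) * (z * z) + 2 * (∫ x, r x * u x ∂ν) * z + ∫ x, r x * u x ^ 2 ∂ν := by
    calc 0 ≤ ∫ x, r x * (z + u x) ^ 2 ∂ν :=
          integral_nonneg_of_ae (hr₀.mono fun x hx ↦ mul_nonneg hx (sq_nonneg _))
      _ = ∫ x, (r x * (z * z) + r x * u x * (2 * z) + r x * u x ^ 2) ∂ν := by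
          congr with x
          ring
      _ = _ := by
          rw [integral_add (by fun_prop) hru₂,
            integral_add (hr.mul_const _) (hru.mul_const _), integral_mul_const,
            integral_mul_const]
          ring
  have discrim_nonpos := discrim_le_zero quadratic_nonneg
  rw [discrim] at discrim_nonpos
  linarith

theorem abs_primitive_mul_le_sqrt {a b y : ℝ} {r u : ℝ → ℝ} (hr : ContinuousOn r (Icc a b))
    (hu : ContinuousOn u (Icc a b)) (hr₀ : ∀ x ∈ Icc a b, 0 ≤ r x) (hy : y ∈ Icc a b) :
    |∫ x in a..y, r x * u x| ≤ √((∫ x in a..b, r x) * ∫ x in a..b, r x * u x ^ 2) := by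
  have hab : a ≤ b := hy.1.trans hy.2
  have integrableOn_Ioc {f : ℝ → ℝ} (hf : ContinuousOn f (Icc a b)) : IntegrableOn f (Ioc a y) :=
    (hf.mono (Icc_subset_Icc_right hy.2)).integrableOn_Icc.mono_set Ioc_subset_Icc_self
  have primitive_le {f : ℝ → ℝ} (hf : ContinuousOn f (Icc a b)) (hf₀ : ∀ x ∈ Icc a b, 0 ≤ f x) :
      ∫ x in a..y, f x ≤ ∫ x in a..b, f x :=
    intervalIntegral.integral_mono_interval le_rfl hy.1 hy.2
      (ae_restrict_of_forall_mem measurableSet_Ioc fun x hx ↦ hf₀ x (Ioc_subset_Icc_self hx))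
      (hf.intervalIntegrable_of_Icc hab)
  have hru₂ : ContinuousOn (fun x ↦ r x * u x ^ 2) (Icc a b) := hr.mul (hu.pow 2)
  have hru₂₀ (x : ℝ) (hx : x ∈ Icc a b) : 0 ≤ r x * u x ^ 2 := mul_nonneg (hr₀ x hx) (sq_nonneg _)
  refine Real.abs_le_sqrt ?_
  calc (∫ x in a..y, r x * u x) ^ 2
      ≤ (∫ x in a..y, r x) * ∫ x in a..y, r x * u x ^ 2 := by
        simp only [intervalIntegral.integral_of_le hy.1]
        exact sq_integral_mul_le (ae_restrict_of_forall_mem measurableSet_Ioc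
          fun x hx ↦ hr₀ x ⟨hx.1.le, hx.2.trans hy.2⟩) (integrableOn_Ioc hr)
          (integrableOn_Ioc (hr.mul hu)) (integrableOn_Ioc hru₂)
    _ ≤ (∫ x in a..b, r x) * ∫ x in a..b, r x * u x ^ 2 :=
        mul_le_mul (primitive_le hr hr₀) (primitive_le hru₂ hru₂₀)
          (intervalIntegral.integral_nonneg hy.1 fun x hx ↦ hru₂₀ x ⟨hx.1, hx.2.trans hy.2⟩)
          (intervalIntegral.integral_nonneg hab hr₀)

namespace ClassicalSolution

/-- The effective viscous flux `μ (∂_y v) / J - π`, whose `y`-derivative is `ρ₀ ∂ₜv` by (E2). -/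
noncomputable def effectiveViscousFlux (μ : ℝ) (J π vy : ℝ → ℝ → ℝ) (y t : ℝ) : ℝ :=
  μ * (vy y t / J y t) - π y t

/-- The momentum `∫₀ʸ ρ₀ v dx` of the part `[0, y]` of the fluid at time `t`. -/
noncomputable def momentum (ρ₀ : ℝ → ℝ) (v : ℝ → ℝ → ℝ) (y t : ℝ) : ℝ :=
  ∫ x in 0..y, ρ₀ x * v x t

/-- The density `ρ₀ v² / 2 + J π / (γ - 1)` of the total (kinetic plus internal) energy. -/
noncomputable def energyDensity (γ : ℝ) (ρ₀ : ℝ → ℝ) (J v π : ℝ → ℝ → ℝ) (y t : ℝ) : ℝ :=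
  ρ₀ y * v y t ^ 2 / 2 + J y t * π y t / (γ - 1)

/-- The space-independent factor `exp (-μ⁻¹ ∫₀ᵗ G(0, s) ds)`, where `G` is the effective viscous
flux. It absorbs the flux at the boundary point `y = 0`, on which there is no direct control. -/
noncomputable def boundaryFactor (μ : ℝ) (J π vy : ℝ → ℝ → ℝ) (t : ℝ) : ℝ :=
  Real.exp (-(∫ s in 0..t, effectiveViscousFlux μ J π vy 0 s) / μ)

/-- The Jacobian multiplied by the integrating factor of the effective viscous flux, so that only
the pressure is left in its evolution equation `∂ₜW = (π / μ) W`. -/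
noncomputable def weightedJacobian (μ : ℝ) (ρ₀ : ℝ → ℝ) (J v π vy : ℝ → ℝ → ℝ) (y t : ℝ) : ℝ :=
  J y t * (boundaryFactor μ J π vy t *
    Real.exp ((momentum ρ₀ v y 0 - momentum ρ₀ v y t) / μ))

variable {L T μ γ : ℝ} {ρ₀ : ℝ → ℝ} {J v π Jt vy vt w πy πt : ℝ → ℝ → ℝ} {y t : ℝ}

theorem boundaryFactor_pos : 0 < boundaryFactor μ J π vy t := Real.exp_pos _

@[simp]
theorem weightedJacobian_zero : weightedJacobian μ ρ₀ J v π vy y 0 = J y 0 := by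
  simp [weightedJacobian, boundaryFactor]

theorem continuousOn_effectiveViscousFlux
    (hsol : ClassicalSolution L T μ γ ρ₀ J v π Jt vy vt w πy πt) :
    ContinuousOn (Function.uncurry (effectiveViscousFlux μ J π vy)) (Icc 0 L ×ˢ Icc 0 T) :=
  (continuousOn_const.mul
    (hsol.contvy.div hsol.contJ fun _ hp ↦ (hsol.Jpos _ hp.1 _ hp.2).ne')).sub hsol.contPi

theorem hasDerivWithinAt_effectiveViscousFlux
    (hsol : ClassicalSolution L T μ γ ρ₀ J v π Jt vy vt w πy πt)
    (hy : y ∈ Icc 0 L) (ht : t ∈ Icc 0 T) :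
    HasDerivWithinAt (fun x ↦ effectiveViscousFlux μ J π vy x t) (ρ₀ y * vt y t) (Icc 0 L) y :=
  (((hsol.hw y hy t ht).const_mul μ).sub (hsol.hPiy y hy t ht)).congr_deriv <| by
    linarith [hsol.eq2 y hy t ht]

theorem integral_jacobian_eq
    (hsol : ClassicalSolution L T μ γ ρ₀ J v π Jt vy vt w πy πt)
    (hL : 0 ≤ L) (hbc : ∀ t ∈ Icc 0 T, v 0 t = 0 ∧ v L t = 0)
    (ht : t ∈ Icc 0 T) : ∫ y in 0..L, J y t = ∫ y in 0..L, J y 0 := by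
  have h₀ : (0 : ℝ) ∈ Icc 0 T := ⟨le_rfl, ht.1.trans ht.2⟩
  refine eq_left_of_hasDerivWithinAt_Icc_zero (f := fun s ↦ ∫ y in 0..L, J y s)
    (fun s hs ↦ ?_) ht
  have integral_Jt_eq_zero : ∫ y in 0..L, Jt y s = 0 := by
    have integrable_Jt : IntervalIntegrable (fun y ↦ Jt y s) volume 0 L :=
      (hsol.contJt.uncurry_right s hs).intervalIntegrable_of_Icc hL
    rw [integral_eq_sub_of_hasDerivWithinAt_Icc hL
      (fun y hy ↦ (hsol.eq1 y hy s hs).symm ▸ hsol.hvy y hy s hs) integrable_Jt,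
      (hbc s hs).1, (hbc s hs).2, sub_self]
  exact (hasDerivWithinAt_integral_of_continuousOn hL
    ((hsol.contJ.uncurry_right 0 h₀).intervalIntegrable_of_Icc hL) hsol.hJt hsol.contJt
    hs).congr_deriv integral_Jt_eq_zero

theorem integral_jacobian_pos
    (hsol : ClassicalSolution L T μ γ ρ₀ J v π Jt vy vt w πy πt)
    (hL : 0 < L) (ht : t ∈ Icc 0 T) :
    0 < ∫ y in 0..L, J y t :=
  intervalIntegral.intervalIntegral_pos_of_pos_on
    ((hsol.contJ.uncurry_right t ht).intervalIntegrable_of_Icc hL.le)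
    (fun y hy ↦ hsol.Jpos y (Ioo_subset_Icc_self hy) t ht) hL

theorem continuousOn_energyDensity
    (hsol : ClassicalSolution L T μ γ ρ₀ J v π Jt vy vt w πy πt)
    (hρ₀ : ContinuousOn ρ₀ (Icc 0 L)) :
    ContinuousOn (Function.uncurry (energyDensity γ ρ₀ J v π)) (Icc 0 L ×ˢ Icc 0 T) :=
  (((continuousOn_comp_fst_prod hρ₀).mul (hsol.contv.pow 2)).div_const 2).add
    ((hsol.contJ.mul hsol.contPi).div_const _)

/-- The derivative is the divergence `∂_y (v G)`, where `G` is the effective viscous flux. -/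
theorem hasDerivWithinAt_energyDensity
    (hsol : ClassicalSolution L T μ γ ρ₀ J v π Jt vy vt w πy πt)
    (hγ : γ ≠ 1) (hy : y ∈ Icc 0 L) (ht : t ∈ Icc 0 T) :
    HasDerivWithinAt (energyDensity γ ρ₀ J v π y)
      (vy y t * effectiveViscousFlux μ J π vy y t + v y t * (ρ₀ y * vt y t)) (Icc 0 T) t := by
  have kinetic := (((hsol.hvt y hy t ht).pow 2).const_mul (ρ₀ y)).div_const 2
  have internal := ((hsol.hJt y hy t ht).mul (hsol.hPit y hy t ht)).div_const (γ - 1)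
  refine (kinetic.add internal).congr_deriv ?_
  have hπt : πt y t = μ * (γ - 1) * (vy y t / J y t) ^ 2 - γ * (vy y t / J y t) * π y t := by
    linarith [hsol.eq3 y hy t ht]
  have hJ : J y t ≠ 0 := (hsol.Jpos y hy t ht).ne'
  have hγ' : γ - 1 ≠ 0 := sub_ne_zero.2 hγ
  rw [hπt, hsol.eq1 y hy t ht, effectiveViscousFlux]
  field_simp
  ring

theorem integral_energyDensity_eq
    (hsol : ClassicalSolution L T μ γ ρ₀ J v π Jt vy vt w πy πt)
    (hL : 0 ≤ L) (hγ : γ ≠ 1) (hρ₀ : ContinuousOn ρ₀ (Icc 0 L))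
    (hbc : ∀ t ∈ Icc 0 T, v 0 t = 0 ∧ v L t = 0) (ht : t ∈ Icc 0 T) :
    ∫ y in 0..L, energyDensity γ ρ₀ J v π y t
      = ∫ y in 0..L, energyDensity γ ρ₀ J v π y 0 := by
  have h₀ : (0 : ℝ) ∈ Icc 0 T := ⟨le_rfl, ht.1.trans ht.2⟩
  let G := effectiveViscousFlux μ J π vy
  let divergence (y t : ℝ) : ℝ := vy y t * G y t + v y t * (ρ₀ y * vt y t)
  have continuousOn_divergence :
      ContinuousOn (Function.uncurry divergence) (Icc 0 L ×ˢ Icc 0 T) :=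
    (hsol.contvy.mul hsol.continuousOn_effectiveViscousFlux).add
      (hsol.contv.mul ((continuousOn_comp_fst_prod hρ₀).mul hsol.contvt))
  refine eq_left_of_hasDerivWithinAt_Icc_zero
    (f := fun s ↦ ∫ y in 0..L, energyDensity γ ρ₀ J v π y s) (fun s hs ↦ ?_) ht
  have integral_divergence_eq_zero : ∫ y in 0..L, divergence y s = 0 := by
    rw [integral_eq_sub_of_hasDerivWithinAt_Icc (f := fun y ↦ v y s * G y s) hL
      (fun y hy ↦ (hsol.hvy y hy s hs).mul (hsol.hasDerivWithinAt_effectiveViscousFlux hy hs))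
      ((continuousOn_divergence.uncurry_right s hs).intervalIntegrable_of_Icc hL),
      (hbc s hs).1, (hbc s hs).2, zero_mul, zero_mul, sub_self]
  exact (hasDerivWithinAt_integral_of_continuousOn hL
    (((hsol.continuousOn_energyDensity hρ₀).uncurry_right 0 h₀).intervalIntegrable_of_Icc hL)
    (fun y hy s hs ↦ hsol.hasDerivWithinAt_energyDensity hγ hy hs) continuousOn_divergence
    hs).congr_deriv integral_divergence_eq_zero

theorem integral_kinetic_le
    (hsol : ClassicalSolution L T μ γ ρ₀ J v π Jt vy vt w πy πt)
    (hL : 0 ≤ L) (hγ : 1 < γ) (hρ₀ : ContinuousOn ρ₀ (Icc 0 L))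
    (hπ : ∀ y ∈ Icc 0 L, ∀ t ∈ Icc 0 T, 0 ≤ π y t) (ht : t ∈ Icc 0 T) :
    ∫ y in 0..L, ρ₀ y * v y t ^ 2
      ≤ 2 * ∫ y in 0..L, energyDensity γ ρ₀ J v π y t := by
  rw [← intervalIntegral.integral_const_mul]
  refine intervalIntegral.integral_mono_on hL
    ((hρ₀.mul ((hsol.contv.uncurry_right t ht).pow 2)).intervalIntegrable_of_Icc hL)
    ((((hsol.continuousOn_energyDensity hρ₀).uncurry_right t ht).intervalIntegrable_of_Icc
      hL).const_mul 2) fun y hy ↦ ?_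
  have internal_nonneg : 0 ≤ J y t * π y t / (γ - 1) :=
    div_nonneg (mul_nonneg (hsol.Jpos y hy t ht).le (hπ y hy t ht)) (sub_pos.2 hγ).le
  rw [energyDensity]
  linarith

theorem integral_jacobian_mul_pressure_le
    (hsol : ClassicalSolution L T μ γ ρ₀ J v π Jt vy vt w πy πt)
    (hL : 0 ≤ L) (hγ : 1 < γ)
    (hρ₀ : ContinuousOn ρ₀ (Icc 0 L)) (hρ₀nonneg : ∀ y ∈ Icc 0 L, 0 ≤ ρ₀ y)
    (ht : t ∈ Icc 0 T) :
    ∫ y in 0..L, J y t * π y t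
      ≤ (γ - 1) * ∫ y in 0..L, energyDensity γ ρ₀ J v π y t := by
  rw [← intervalIntegral.integral_const_mul]
  refine intervalIntegral.integral_mono_on hL
    (((hsol.contJ.uncurry_right t ht).mul
      (hsol.contPi.uncurry_right t ht)).intervalIntegrable_of_Icc hL)
    ((((hsol.continuousOn_energyDensity hρ₀).uncurry_right t ht).intervalIntegrable_of_Icc
      hL).const_mul (γ - 1)) fun y hy ↦ ?_
  have kinetic_nonneg : 0 ≤ (γ - 1) * (ρ₀ y * v y t ^ 2 / 2) :=
    mul_nonneg (sub_pos.2 hγ).le (by have := hρ₀nonneg y hy; positivity)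
  rw [energyDensity, mul_add, mul_div_cancel₀ _ (sub_pos.2 hγ).ne']
  linarith

theorem abs_momentum_le
    (hsol : ClassicalSolution L T μ γ ρ₀ J v π Jt vy vt w πy πt)
    (hγ : 1 < γ) (hρ₀ : ContinuousOn ρ₀ (Icc 0 L))
    (hρ₀nonneg : ∀ y ∈ Icc 0 L, 0 ≤ ρ₀ y)
    (hbc : ∀ t ∈ Icc 0 T, v 0 t = 0 ∧ v L t = 0)
    (hπ : ∀ y ∈ Icc 0 L, ∀ t ∈ Icc 0 T, 0 ≤ π y t)
    (hy : y ∈ Icc 0 L) (ht : t ∈ Icc 0 T) :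
    |momentum ρ₀ v y t|
      ≤ √(2 * (∫ y in 0..L, ρ₀ y) * ∫ y in 0..L, energyDensity γ ρ₀ J v π y 0) := by
  have hL : 0 ≤ L := hy.1.trans hy.2
  refine (abs_primitive_mul_le_sqrt hρ₀ (hsol.contv.uncurry_right t ht) hρ₀nonneg hy).trans
    (Real.sqrt_le_sqrt ?_)
  have kinetic_le := hsol.integral_kinetic_le hL hγ hρ₀ hπ ht
  rw [hsol.integral_energyDensity_eq hL hγ.ne' hρ₀ hbc ht] at kinetic_le
  calc (∫ y in 0..L, ρ₀ y) * ∫ y in 0..L, ρ₀ y * v y t ^ 2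
      ≤ (∫ y in 0..L, ρ₀ y) * (2 * ∫ y in 0..L, energyDensity γ ρ₀ J v π y 0) :=
        mul_le_mul_of_nonneg_left kinetic_le (intervalIntegral.integral_nonneg hL hρ₀nonneg)
    _ = _ := by ring

theorem continuousOn_momentum
    (hsol : ClassicalSolution L T μ γ ρ₀ J v π Jt vy vt w πy πt)
    (hρ₀ : ContinuousOn ρ₀ (Icc 0 L)) :
    ContinuousOn (Function.uncurry (momentum ρ₀ v)) (Icc 0 L ×ˢ Icc 0 T) :=
  continuousOn_parametric_primitive (F := fun x s ↦ ρ₀ x * v x s)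
    ((continuousOn_comp_fst_prod hρ₀).mul hsol.contv)

theorem hasDerivWithinAt_momentum
    (hsol : ClassicalSolution L T μ γ ρ₀ J v π Jt vy vt w πy πt)
    (hρ₀ : ContinuousOn ρ₀ (Icc 0 L)) (hy : y ∈ Icc 0 L)
    (ht : t ∈ Icc 0 T) :
    HasDerivWithinAt (momentum ρ₀ v y)
      (effectiveViscousFlux μ J π vy y t - effectiveViscousFlux μ J π vy 0 t) (Icc 0 T) t := by
  have h₀ : (0 : ℝ) ∈ Icc 0 T := ⟨le_rfl, ht.1.trans ht.2⟩
  have hsub : Icc 0 y ⊆ Icc 0 L := Icc_subset_Icc_right hy.2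
  have continuousOn_force : ContinuousOn (Function.uncurry fun x s ↦ ρ₀ x * vt x s)
      (Icc 0 y ×ˢ Icc 0 T) :=
    ((continuousOn_comp_fst_prod hρ₀).mul hsol.contvt).mono (prod_mono_left hsub)
  rw [← integral_eq_sub_of_hasDerivWithinAt_Icc hy.1
    (fun x hx ↦ (hsol.hasDerivWithinAt_effectiveViscousFlux (hsub hx) ht).mono hsub)
    ((continuousOn_force.uncurry_right t ht).intervalIntegrable_of_Icc hy.1)]
  exact hasDerivWithinAt_integral_of_continuousOn hy.1
    (((hρ₀.mul (hsol.contv.uncurry_right 0 h₀)).mono hsub).intervalIntegrable_of_Icc hy.1)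
    (fun x hx s hs ↦ (hsol.hvt x (hsub hx) s hs).const_mul (ρ₀ x)) continuousOn_force ht

theorem hasDerivWithinAt_boundaryFactor
    (hsol : ClassicalSolution L T μ γ ρ₀ J v π Jt vy vt w πy πt)
    (hL : 0 ≤ L) (ht : t ∈ Icc 0 T) :
    HasDerivWithinAt (boundaryFactor μ J π vy)
      (boundaryFactor μ J π vy t * (-effectiveViscousFlux μ J π vy 0 t / μ)) (Icc 0 T) t :=
  ((hasDerivWithinAt_primitive_Icc (hsol.continuousOn_effectiveViscousFlux.uncurry_left 0
    (left_mem_Icc.2 hL)) ht).neg.div_const μ).exp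

theorem continuousOn_weightedJacobian
    (hsol : ClassicalSolution L T μ γ ρ₀ J v π Jt vy vt w πy πt)
    (hL : 0 ≤ L) (hρ₀ : ContinuousOn ρ₀ (Icc 0 L)) :
    ContinuousOn (Function.uncurry (weightedJacobian μ ρ₀ J v π vy)) (Icc 0 L ×ˢ Icc 0 T) := by
  have continuousOn_boundaryFactor :
      ContinuousOn (fun p : ℝ × ℝ ↦ boundaryFactor μ J π vy p.2) (Icc 0 L ×ˢ Icc 0 T) :=
    (HasDerivWithinAt.continuousOn fun _ hs ↦ hsol.hasDerivWithinAt_boundaryFactor hL hs).comp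
      continuousOn_snd fun _ hp ↦ hp.2
  have continuousOn_initialMomentum :
      ContinuousOn (fun p : ℝ × ℝ ↦ momentum ρ₀ v p.1 0) (Icc 0 L ×ˢ Icc 0 T) :=
    (hsol.continuousOn_momentum hρ₀).comp (continuousOn_fst.prodMk continuousOn_const)
      fun _ hp ↦ ⟨hp.1, le_rfl, hp.2.1.trans hp.2.2⟩
  exact hsol.contJ.mul (continuousOn_boundaryFactor.mul
    ((continuousOn_initialMomentum.sub (hsol.continuousOn_momentum hρ₀)).div_const μ).rexp)

theorem hasDerivWithinAt_weightedJacobian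
    (hsol : ClassicalSolution L T μ γ ρ₀ J v π Jt vy vt w πy πt)
    (hμ : μ ≠ 0) (hρ₀ : ContinuousOn ρ₀ (Icc 0 L))
    (hy : y ∈ Icc 0 L) (ht : t ∈ Icc 0 T) :
    HasDerivWithinAt (weightedJacobian μ ρ₀ J v π vy y)
      (π y t / μ * weightedJacobian μ ρ₀ J v π vy y t) (Icc 0 T) t := by
  refine ((hsol.hJt y hy t ht).mul
    ((hsol.hasDerivWithinAt_boundaryFactor (hy.1.trans hy.2) ht).mul
      (((hsol.hasDerivWithinAt_momentum hρ₀ hy ht).const_sub (momentum ρ₀ v y 0)).div_const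
        μ).exp)).congr_deriv ?_
  have hJ : J y t ≠ 0 := (hsol.Jpos y hy t ht).ne'
  simp only [weightedJacobian, effectiveViscousFlux, Pi.mul_apply, hsol.eq1 y hy t ht]
  field_simp
  ring

theorem weightedJacobian_pos
    (hsol : ClassicalSolution L T μ γ ρ₀ J v π Jt vy vt w πy πt)
    (hy : y ∈ Icc 0 L) (ht : t ∈ Icc 0 T) :
    0 < weightedJacobian μ ρ₀ J v π vy y t :=
  mul_pos (hsol.Jpos y hy t ht) (mul_pos boundaryFactor_pos (Real.exp_pos _))

theorem initial_jacobian_le_weightedJacobian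
    (hsol : ClassicalSolution L T μ γ ρ₀ J v π Jt vy vt w πy πt)
    (hμ : 0 < μ) (hρ₀ : ContinuousOn ρ₀ (Icc 0 L))
    (hπ : ∀ y ∈ Icc 0 L, ∀ t ∈ Icc 0 T, 0 ≤ π y t)
    (hy : y ∈ Icc 0 L) (ht : t ∈ Icc 0 T) :
    J y 0 ≤ weightedJacobian μ ρ₀ J v π vy y t := by
  have monotoneOn_weightedJacobian : MonotoneOn (weightedJacobian μ ρ₀ J v π vy y) (Icc 0 T) :=
    monotoneOn_Icc_of_hasDerivWithinAt_nonneg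
      (fun s hs ↦ hsol.hasDerivWithinAt_weightedJacobian hμ.ne' hρ₀ hy hs)
      (fun s hs ↦ mul_nonneg (div_nonneg (hπ y hy s hs) hμ.le) (hsol.weightedJacobian_pos hy hs).le)
  simpa only [weightedJacobian_zero] using
    monotoneOn_weightedJacobian ⟨le_rfl, ht.1.trans ht.2⟩ ht ht.1

theorem weightedJacobian_le
    (hsol : ClassicalSolution L T μ γ ρ₀ J v π Jt vy vt w πy πt)
    {M : ℝ} (hμ : 0 < μ)
    (hM : ∀ y ∈ Icc 0 L, ∀ t ∈ Icc 0 T, |momentum ρ₀ v y t| ≤ M)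
    (hy : y ∈ Icc 0 L) (ht : t ∈ Icc 0 T) :
    weightedJacobian μ ρ₀ J v π vy y t
      ≤ Real.exp (2 * M / μ) * (boundaryFactor μ J π vy t * J y t) := by
  have momentum_sub_le : momentum ρ₀ v y 0 - momentum ρ₀ v y t ≤ 2 * M := by
    linarith [abs_le.1 (hM y hy 0 ⟨le_rfl, ht.1.trans ht.2⟩), abs_le.1 (hM y hy t ht)]
  calc weightedJacobian μ ρ₀ J v π vy y t
      = Real.exp ((momentum ρ₀ v y 0 - momentum ρ₀ v y t) / μ) *
          (boundaryFactor μ J π vy t * J y t) := by rw [weightedJacobian]; ring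
    _ ≤ Real.exp (2 * M / μ) * (boundaryFactor μ J π vy t * J y t) := by
      have hb : 0 < boundaryFactor μ J π vy t := boundaryFactor_pos
      have hJ := hsol.Jpos y hy t ht
      gcongr

theorem boundaryFactor_mul_jacobian_le
    (hsol : ClassicalSolution L T μ γ ρ₀ J v π Jt vy vt w πy πt)
    {M : ℝ} (hμ : 0 < μ)
    (hM : ∀ y ∈ Icc 0 L, ∀ t ∈ Icc 0 T, |momentum ρ₀ v y t| ≤ M)
    (hy : y ∈ Icc 0 L) (ht : t ∈ Icc 0 T) :
    boundaryFactor μ J π vy t * J y t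
      ≤ Real.exp (2 * M / μ) * weightedJacobian μ ρ₀ J v π vy y t := by
  have momentum_sub_le : momentum ρ₀ v y t - momentum ρ₀ v y 0 ≤ 2 * M := by
    linarith [abs_le.1 (hM y hy 0 ⟨le_rfl, ht.1.trans ht.2⟩), abs_le.1 (hM y hy t ht)]
  calc boundaryFactor μ J π vy t * J y t
      = Real.exp ((momentum ρ₀ v y t - momentum ρ₀ v y 0) / μ) *
          weightedJacobian μ ρ₀ J v π vy y t := by
        rw [weightedJacobian, ← neg_sub (momentum ρ₀ v y 0), neg_div, Real.exp_neg]
        field_simp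
    _ ≤ Real.exp (2 * M / μ) * weightedJacobian μ ρ₀ J v π vy y t := by
        have := (hsol.weightedJacobian_pos hy ht).le
        gcongr

theorem boundaryFactor_mul_integral_jacobian_le
    (hsol : ClassicalSolution L T μ γ ρ₀ J v π Jt vy vt w πy πt)
    {M : ℝ} (hL : 0 ≤ L) (hμ : 0 < μ)
    (hρ₀ : ContinuousOn ρ₀ (Icc 0 L))
    (hM : ∀ y ∈ Icc 0 L, ∀ t ∈ Icc 0 T, |momentum ρ₀ v y t| ≤ M) (ht : t ∈ Icc 0 T) :
    boundaryFactor μ J π vy t * ∫ y in 0..L, J y t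
      ≤ Real.exp (2 * M / μ) * ∫ y in 0..L, weightedJacobian μ ρ₀ J v π vy y t := by
  simp only [← intervalIntegral.integral_const_mul]
  exact intervalIntegral.integral_mono_on hL
    (((hsol.contJ.uncurry_right t ht).intervalIntegrable_of_Icc hL).const_mul _)
    ((((hsol.continuousOn_weightedJacobian hL hρ₀).uncurry_right t ht).intervalIntegrable_of_Icc
      hL).const_mul _)
    fun y hy ↦ hsol.boundaryFactor_mul_jacobian_le hμ hM hy ht

theorem continuousOn_pressure_mul_weightedJacobian
    (hsol : ClassicalSolution L T μ γ ρ₀ J v π Jt vy vt w πy πt)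
    (hL : 0 ≤ L) (hρ₀ : ContinuousOn ρ₀ (Icc 0 L)) :
    ContinuousOn (Function.uncurry fun y t ↦ π y t / μ * weightedJacobian μ ρ₀ J v π vy y t)
      (Icc 0 L ×ˢ Icc 0 T) :=
  (hsol.contPi.div_const μ).mul (hsol.continuousOn_weightedJacobian hL hρ₀)

theorem integral_pressure_mul_weightedJacobian_le
    (hsol : ClassicalSolution L T μ γ ρ₀ J v π Jt vy vt w πy πt)
    {M : ℝ} (hL : 0 ≤ L) (hμ : 0 < μ)
    (hρ₀ : ContinuousOn ρ₀ (Icc 0 L))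
    (hπ : ∀ y ∈ Icc 0 L, ∀ t ∈ Icc 0 T, 0 ≤ π y t)
    (hM : ∀ y ∈ Icc 0 L, ∀ t ∈ Icc 0 T, |momentum ρ₀ v y t| ≤ M) (ht : t ∈ Icc 0 T) :
    ∫ y in 0..L, π y t / μ * weightedJacobian μ ρ₀ J v π vy y t
      ≤ Real.exp (2 * M / μ) / μ * boundaryFactor μ J π vy t * ∫ y in 0..L, J y t * π y t := by
  rw [← intervalIntegral.integral_const_mul]
  refine intervalIntegral.integral_mono_on hL
    (((hsol.continuousOn_pressure_mul_weightedJacobian hL hρ₀).uncurry_right t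
      ht).intervalIntegrable_of_Icc hL)
    ((((hsol.contJ.uncurry_right t ht).mul
      (hsol.contPi.uncurry_right t ht)).intervalIntegrable_of_Icc hL).const_mul _) fun y hy ↦ ?_
  calc π y t / μ * weightedJacobian μ ρ₀ J v π vy y t
      ≤ π y t / μ * (Real.exp (2 * M / μ) * (boundaryFactor μ J π vy t * J y t)) :=
        mul_le_mul_of_nonneg_left (hsol.weightedJacobian_le hμ hM hy ht)
          (div_nonneg (hπ y hy t ht) hμ.le)
    _ = _ := by ring

theorem integral_pressure_mul_weightedJacobian_le_mul
    (hsol : ClassicalSolution L T μ γ ρ₀ J v π Jt vy vt w πy πt)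
    {M P : ℝ} (hL : 0 < L) (hμ : 0 < μ)
    (hρ₀ : ContinuousOn ρ₀ (Icc 0 L)) (hbc : ∀ t ∈ Icc 0 T, v 0 t = 0 ∧ v L t = 0)
    (hπ : ∀ y ∈ Icc 0 L, ∀ t ∈ Icc 0 T, 0 ≤ π y t)
    (hM : ∀ y ∈ Icc 0 L, ∀ t ∈ Icc 0 T, |momentum ρ₀ v y t| ≤ M)
    (ht : t ∈ Icc 0 T) (hP : ∫ y in 0..L, J y t * π y t ≤ P) :
    ∫ y in 0..L, π y t / μ * weightedJacobian μ ρ₀ J v π vy y t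
      ≤ P / (μ * ∫ y in 0..L, J y 0) * Real.exp (4 / μ * M) *
        ∫ y in 0..L, weightedJacobian μ ρ₀ J v π vy y t := by
  have hℓ := hsol.integral_jacobian_pos hL ⟨le_rfl, ht.1.trans ht.2⟩
  have hP₀ : 0 ≤ P := (intervalIntegral.integral_nonneg hL.le fun y hy ↦
    mul_nonneg (hsol.Jpos y hy t ht).le (hπ y hy t ht)).trans hP
  have factor_le := hsol.boundaryFactor_mul_integral_jacobian_le hL.le hμ hρ₀ hM ht
  rw [hsol.integral_jacobian_eq hL.le hbc ht, ← le_div_iff₀ hℓ] at factor_le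
  have hb : 0 < boundaryFactor μ J π vy t := boundaryFactor_pos
  calc ∫ y in 0..L, π y t / μ * weightedJacobian μ ρ₀ J v π vy y t
      ≤ Real.exp (2 * M / μ) / μ * boundaryFactor μ J π vy t * ∫ y in 0..L, J y t * π y t :=
        hsol.integral_pressure_mul_weightedJacobian_le hL.le hμ hρ₀ hπ hM ht
    _ ≤ Real.exp (2 * M / μ) / μ * boundaryFactor μ J π vy t * P := by gcongr
    _ ≤ Real.exp (2 * M / μ) / μ * (Real.exp (2 * M / μ) *
          (∫ y in 0..L, weightedJacobian μ ρ₀ J v π vy y t) / ∫ y in 0..L, J y 0) * P := by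
        gcongr
    _ = _ := by
        rw [show 4 / μ * M = 2 * M / μ + 2 * M / μ by ring, Real.exp_add]
        field_simp

theorem integral_weightedJacobian_le
    (hsol : ClassicalSolution L T μ γ ρ₀ J v π Jt vy vt w πy πt)
    {M P : ℝ} (hL : 0 < L) (hμ : 0 < μ)
    (hρ₀ : ContinuousOn ρ₀ (Icc 0 L)) (hbc : ∀ t ∈ Icc 0 T, v 0 t = 0 ∧ v L t = 0)
    (hπ : ∀ y ∈ Icc 0 L, ∀ t ∈ Icc 0 T, 0 ≤ π y t)
    (hM : ∀ y ∈ Icc 0 L, ∀ t ∈ Icc 0 T, |momentum ρ₀ v y t| ≤ M)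
    (hP : ∀ t ∈ Icc 0 T, ∫ y in 0..L, J y t * π y t ≤ P) (ht : t ∈ Icc 0 T) :
    ∫ y in 0..L, weightedJacobian μ ρ₀ J v π vy y t
      ≤ (∫ y in 0..L, J y 0) *
        Real.exp (P / (μ * ∫ y in 0..L, J y 0) * Real.exp (4 / μ * M) * t) := by
  have h₀ : (0 : ℝ) ∈ Icc 0 T := ⟨le_rfl, ht.1.trans ht.2⟩
  have integrable_initial :
      IntervalIntegrable (fun y ↦ weightedJacobian μ ρ₀ J v π vy y 0) volume 0 L :=
    ((hsol.continuousOn_weightedJacobian hL.le hρ₀).uncurry_right 0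
      h₀).intervalIntegrable_of_Icc hL.le
  have growth := le_mul_exp_of_hasDerivWithinAt_le_mul
    (fun s hs ↦ hasDerivWithinAt_integral_of_continuousOn hL.le integrable_initial
      (fun y hy r hr ↦ hsol.hasDerivWithinAt_weightedJacobian hμ.ne' hρ₀ hy hr)
      (hsol.continuousOn_pressure_mul_weightedJacobian hL.le hρ₀) hs)
    (fun s hs ↦ hsol.integral_pressure_mul_weightedJacobian_le_mul hL hμ hρ₀ hbc hπ hM hs (hP s hs))
    ht
  simpa only [weightedJacobian_zero, sub_zero] using growth

theorem boundaryFactor_le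
    (hsol : ClassicalSolution L T μ γ ρ₀ J v π Jt vy vt w πy πt)
    {M P : ℝ} (hL : 0 < L) (hμ : 0 < μ)
    (hρ₀ : ContinuousOn ρ₀ (Icc 0 L)) (hbc : ∀ t ∈ Icc 0 T, v 0 t = 0 ∧ v L t = 0)
    (hπ : ∀ y ∈ Icc 0 L, ∀ t ∈ Icc 0 T, 0 ≤ π y t)
    (hM : ∀ y ∈ Icc 0 L, ∀ t ∈ Icc 0 T, |momentum ρ₀ v y t| ≤ M)
    (hP : ∀ t ∈ Icc 0 T, ∫ y in 0..L, J y t * π y t ≤ P) (ht : t ∈ Icc 0 T) :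
    boundaryFactor μ J π vy t ≤ Real.exp (2 * M / μ) *
      Real.exp (P / (μ * ∫ y in 0..L, J y 0) * Real.exp (4 / μ * M) * t) := by
  have factor_le := hsol.boundaryFactor_mul_integral_jacobian_le hL.le hμ hρ₀ hM ht
  rw [hsol.integral_jacobian_eq hL.le hbc ht] at factor_le
  have hℓ := hsol.integral_jacobian_pos hL ⟨le_rfl, ht.1.trans ht.2⟩
  refine le_of_mul_le_mul_right (factor_le.trans ?_) hℓ
  rw [mul_assoc, mul_comm (Real.exp (_ * t))]
  exact mul_le_mul_of_nonneg_left
    (hsol.integral_weightedJacobian_le hL hμ hρ₀ hbc hπ hM hP ht) (Real.exp_pos _).le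

theorem initial_jacobian_mul_exp_le
    (hsol : ClassicalSolution L T μ γ ρ₀ J v π Jt vy vt w πy πt)
    {M P : ℝ} (hL : 0 < L) (hμ : 0 < μ)
    (hρ₀ : ContinuousOn ρ₀ (Icc 0 L)) (hbc : ∀ t ∈ Icc 0 T, v 0 t = 0 ∧ v L t = 0)
    (hπ : ∀ y ∈ Icc 0 L, ∀ t ∈ Icc 0 T, 0 ≤ π y t)
    (hM : ∀ y ∈ Icc 0 L, ∀ t ∈ Icc 0 T, |momentum ρ₀ v y t| ≤ M)
    (hP : ∀ t ∈ Icc 0 T, ∫ y in 0..L, J y t * π y t ≤ P)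
    (hy : y ∈ Icc 0 L) (ht : t ∈ Icc 0 T) :
    J y 0 * Real.exp (-(4 / μ) * M
        - P / (μ * ∫ y in 0..L, J y 0) * Real.exp (4 / μ * M) * t) ≤ J y t := by
  set C := P / (μ * ∫ y in 0..L, J y 0) * Real.exp (4 / μ * M)
  have exp_split : Real.exp (-(4 / μ) * M - C * t)
      = (Real.exp (2 * M / μ) * (Real.exp (2 * M / μ) * Real.exp (C * t)))⁻¹ := by
    rw [← Real.exp_add, ← Real.exp_add, ← Real.exp_neg]
    ring_nf
  rw [exp_split, mul_inv_le_iff₀ (by positivity)]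
  have hJ := (hsol.Jpos y hy t ht).le
  calc J y 0 ≤ weightedJacobian μ ρ₀ J v π vy y t :=
        hsol.initial_jacobian_le_weightedJacobian hμ hρ₀ hπ hy ht
    _ ≤ Real.exp (2 * M / μ) * (boundaryFactor μ J π vy t * J y t) :=
        hsol.weightedJacobian_le hμ hM hy ht
    _ ≤ Real.exp (2 * M / μ) * (Real.exp (2 * M / μ) * Real.exp (C * t) * J y t) := by
        gcongr
        exact hsol.boundaryFactor_le hL hμ hρ₀ hbc hπ hM hP ht
    _ = _ := by ring

end ClassicalSolution

theorem lower_bound_J_general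
    (L T μ γ : ℝ) (hL : 0 < L) (hμ : 0 < μ) (hγ : 1 < γ)
    (ρ₀ : ℝ → ℝ) (hρ₀ : ContinuousOn ρ₀ (Icc 0 L))
    (hρ₀nonneg : ∀ y ∈ Icc 0 L, 0 ≤ ρ₀ y)
    (J v π Jt vy vt w πy πt : ℝ → ℝ → ℝ)
    (hsol : ClassicalSolution L T μ γ ρ₀ J v π Jt vy vt w πy πt)
    (hbc : ∀ t ∈ Icc 0 T, v 0 t = 0 ∧ v L t = 0)
    (hπnonneg : ∀ y ∈ Icc 0 L, ∀ t ∈ Icc 0 T, 0 ≤ π y t)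
    (m₀ ℓ₀ E₀ : ℝ)
    (hm₀ : m₀ = ∫ y in 0..L, ρ₀ y)
    (hℓ₀ : ℓ₀ = ∫ y in 0..L, J y 0)
    (hE₀ : E₀ = ∫ y in 0..L, (ρ₀ y * (v y 0) ^ 2 / 2 + J y 0 * π y 0 / (γ - 1))) :
    ∀ y ∈ Icc 0 L, ∀ t ∈ Icc 0 T,
      J y 0 * Real.exp (-(4 / μ) * Real.sqrt (2 * m₀ * E₀)
          - ((γ - 1) * E₀ / (μ * ℓ₀)) * Real.exp ((4 / μ) * Real.sqrt (2 * m₀ * E₀)) * t)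
        ≤ J y t := by
  intro y hy t ht
  have momentum_bound (y : ℝ) (hy : y ∈ Icc 0 L) (t : ℝ) (ht : t ∈ Icc 0 T) :
      |ClassicalSolution.momentum ρ₀ v y t| ≤ √(2 * m₀ * E₀) :=
    hm₀ ▸ hE₀ ▸ hsol.abs_momentum_le hγ hρ₀ hρ₀nonneg hbc hπnonneg hy ht
  have pressure_bound (t : ℝ) (ht : t ∈ Icc 0 T) :
      ∫ y in 0..L, J y t * π y t ≤ (γ - 1) * E₀ := by
    refine (hsol.integral_jacobian_mul_pressure_le hL.le hγ hρ₀ hρ₀nonneg ht).trans_eq ?_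
    rw [hsol.integral_energyDensity_eq hL.le hγ.ne' hρ₀ hbc ht, hE₀]
    rfl
  exact hℓ₀ ▸ hsol.initial_jacobian_mul_exp_le hL hμ hρ₀ hbc hπnonneg momentum_bound
    pressure_bound hy ht

/-- (Proposition 2.3: uniform positive lower bound of the Jacobian.)
For a classical solution with `ρ₀ ≥ 0`, `π ≥ 0` and `J₀ ≥ J̲ > 0`,
`J(y,t) ≥ J̲ exp{-(4/μ)√(2m₀E₀) - ((γ-1)E₀/(μℓ₀)) e^{(4/μ)√(2m₀E₀)} t}`. -/
theorem lower_bound_J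
    (L T μ γ : ℝ) (hL : 0 < L) (hT : 0 < T) (hμ : 0 < μ) (hγ : 1 < γ)
    (ρ₀ : ℝ → ℝ) (hρ₀ : ContinuousOn ρ₀ (Icc 0 L))
    (hρ₀nonneg : ∀ y ∈ Icc (0:ℝ) L, 0 ≤ ρ₀ y)
    (J v π Jt vy vt w πy πt Jy Jyt : ℝ → ℝ → ℝ)
    (hsol : ClassicalSolution L T μ γ ρ₀ J v π Jt vy vt w πy πt)
    (hbc : ∀ t ∈ Icc (0:ℝ) T, v 0 t = 0 ∧ v L t = 0)
    (hJy : ∀ y ∈ Icc (0:ℝ) L, ∀ t ∈ Icc (0:ℝ) T,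
      HasDerivWithinAt (fun x => J x t) (Jy y t) (Icc 0 L) y)
    (hJyt : ∀ y ∈ Icc (0:ℝ) L, ∀ t ∈ Icc (0:ℝ) T,
      HasDerivWithinAt (fun s => Jy y s) (Jyt y t) (Icc 0 T) t)
    (hJytcont : ContinuousOn (fun p : ℝ × ℝ => Jyt p.1 p.2) (Icc 0 L ×ˢ Icc 0 T))
    (hπnonneg : ∀ y ∈ Icc (0:ℝ) L, ∀ t ∈ Icc (0:ℝ) T, 0 ≤ π y t)
    (Jlow : ℝ) (hJlow : 0 < Jlow)
    (hJ₀ : ∀ y ∈ Icc (0:ℝ) L, Jlow ≤ J y 0)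
    (m₀ ℓ₀ E₀ : ℝ)
    (hm₀ : m₀ = ∫ y in (0:ℝ)..L, ρ₀ y)
    (hℓ₀ : ℓ₀ = ∫ y in (0:ℝ)..L, J y 0)
    (hE₀ : E₀ = ∫ y in (0:ℝ)..L, (ρ₀ y * (v y 0) ^ 2 / 2 + J y 0 * π y 0 / (γ - 1))) :
    ∀ y ∈ Icc (0:ℝ) L, ∀ t ∈ Icc (0:ℝ) T,
      Jlow * Real.exp (-(4 / μ) * Real.sqrt (2 * m₀ * E₀)
          - ((γ - 1) * E₀ / (μ * ℓ₀)) * Real.exp ((4 / μ) * Real.sqrt (2 * m₀ * E₀)) * t)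
        ≤ J y t := fun y hy t ht ↦
  (mul_le_mul_of_nonneg_right (hJ₀ y hy) (Real.exp_pos _).le).trans
    (lower_bound_J_general L T μ γ hL hμ hγ ρ₀ hρ₀ hρ₀nonneg J v π Jt vy vt w πy πt hsol hbc
      hπnonneg m₀ ℓ₀ E₀ hm₀ hℓ₀ hE₀ y hy t ht)
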